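/- The connected components (in the Euclidean topology) of a semialgebraic subset of ℝⁿ are semialgebraic, and there are finitely many of them. -/

import Mathlib

/-- Semialgebraic subsets of `ι → ℝ`. -/
inductive IsSemialgebraic (ι : Type) [Fintype ι] : Set (ι → ℝ) → Prop
  | basic (p : MvPolynomial ι ℝ) : IsSemialgebraic ι {x | 0 < MvPolynomial.eval x p}
  | compl {s : Set (ι → ℝ)} : IsSemialgebraic ι s → IsSemialgebraic ι sᶜ
  | union {s t : Set (ι → ℝ)} : IsSemialgebraic ι s → IsSemialgebraic ι t →
      IsSemialgebraic ι (s ∪ t)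

/-- Thom lemma, for a single polynomial. -/
lemma thom_aux (N : ℕ) : ∀ (f : Polynomial ℝ), f.natDegree < N → ∀ s t : ℝ,
    (∀ k, SignType.sign (Polynomial.eval s (Polynomial.derivative^[k] f)) =
      SignType.sign (Polynomial.eval t (Polynomial.derivative^[k] f))) →
    ∀ u ∈ Set.Icc s t, ∀ k, SignType.sign (Polynomial.eval u (Polynomial.derivative^[k] f)) =
      SignType.sign (Polynomial.eval s (Polynomial.derivative^[k] f)) := by
  induction N with
  | zero => intro f hf; omega
  | succ N ih =>
    intro f hf s t h
    by_cases hd : f.natDegree = 0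
    · obtain ⟨c, rfl⟩ := Polynomial.natDegree_eq_zero.mp hd
      intro u hu k
      cases k with
      | zero => simp
      | succ k => simp [Function.iterate_succ_apply]
    have ih' := ih (Polynomial.derivative f)
      (by have := Polynomial.natDegree_derivative_lt hd; omega) s t
      (fun k => by simpa [Function.iterate_succ_apply] using h (k + 1))
    intro u hu k
    cases k with
    | succ k => simpa [Function.iterate_succ_apply] using ih' u hu k
    | zero =>
      have h0 := h 0
      simp only [Function.iterate_zero, id_eq] at h0 ⊢
      have hs : s ∈ Set.Icc s t := ⟨le_rfl, hu.1.trans hu.2⟩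
      have ht : t ∈ Set.Icc s t := ⟨hu.1.trans hu.2, le_rfl⟩
      rcases le_total 0 (SignType.sign (Polynomial.eval s (Polynomial.derivative f))) with hσ | hσ
      · have hm : MonotoneOn (fun x => Polynomial.eval x f) (Set.Icc s t) := by
          apply monotoneOn_of_deriv_nonneg (convex_Icc s t) f.continuous.continuousOn
            f.differentiable.differentiableOn
          intro x hx
          rw [Polynomial.deriv]
          have := ih' x (interior_subset hx) 0
          simp only [Function.iterate_zero, id_eq] at this
          rw [← this] at hσ
          exact sign_nonneg_iff.mp hσ
        apply le_antisymm
        · rw [h0]; exact SignType.sign.monotone (hm hu ht hu.2)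
        · exact SignType.sign.monotone (hm hs hu hu.1)
      · have hm : AntitoneOn (fun x => Polynomial.eval x f) (Set.Icc s t) := by
          apply antitoneOn_of_deriv_nonpos (convex_Icc s t) f.continuous.continuousOn
            f.differentiable.differentiableOn
          intro x hx
          rw [Polynomial.deriv]
          have := ih' x (interior_subset hx) 0
          simp only [Function.iterate_zero, id_eq] at this
          rw [← this] at hσ
          exact sign_nonpos_iff.mp hσ
        apply le_antisymm
        · exact SignType.sign.monotone (hm hs hu hu.1)
        · rw [h0]; exact SignType.sign.monotone (hm hu ht hu.2)

lemma preconn_of_fibers {X : Type*} [TopologicalSpace X] [PreconnectedSpace X] (C : Set (X × ℝ))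
    (hopen : ∀ x0 t0, (x0, t0) ∈ C → ∀ r > 0, ∀ᶠ x in nhds x0, ∃ t, |t - t0| < r ∧ (x, t) ∈ C)
    (hclosed : ∀ x0, ∀ᶠ x in nhds x0, (∃ t, (x, t) ∈ C) → ∃ t, (x0, t) ∈ C)
    (hfib : ∀ x, Set.OrdConnected {t | (x, t) ∈ C}) : IsPreconnected C := by
  rw [isPreconnected_iff_subset_of_disjoint]
  have key : ∀ u : Set (X × ℝ), IsOpen u → IsOpen {x | ∃ t, (x, t) ∈ C ∧ (x, t) ∈ u} := by
    intro u hu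
    rw [isOpen_iff_mem_nhds]
    rintro x0 ⟨t0, hC, hu0⟩
    have h1 := hu.mem_nhds hu0
    rw [nhds_prod_eq, Filter.mem_prod_iff] at h1
    obtain ⟨a, ha, b, hb, hab⟩ := h1
    obtain ⟨r, hr, hrb⟩ := Metric.mem_nhds_iff.mp hb
    filter_upwards [hopen x0 t0 hC r hr, ha] with x ⟨t, ht, hxt⟩ hxa
    exact ⟨t, hxt, hab ⟨hxa, hrb (by simpa [Real.dist_eq] using ht)⟩⟩
  intro u v hu hv huv hdis
  have hU := key u hu
  have hV := key v hv
  have hdisj : ∀ x, (∃ t, (x, t) ∈ C ∧ (x, t) ∈ u) → (∃ t, (x, t) ∈ C ∧ (x, t) ∈ v) → False := by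
    rintro x ⟨t, ht, htu⟩ ⟨t', ht', htv⟩
    have hc := (hfib x).isPreconnected
    rw [isPreconnected_iff_subset_of_disjoint] at hc
    have hcont : Continuous fun t : ℝ => (x, t) := by fun_prop
    rcases hc ((fun t => (x, t)) ⁻¹' u) ((fun t => (x, t)) ⁻¹' v) (hu.preimage hcont)
      (hv.preimage hcont) (fun t ht => huv ht) (by
        ext s
        simp only [Set.mem_inter_iff, Set.mem_ofPred_eq, Set.mem_preimage, Set.mem_empty_iff_false,
          iff_false]
        intro hs
        have : (x, s) ∈ C ∩ (u ∩ v) := hs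
        rw [hdis] at this
        exact this) with h | h
    · have : (x, t') ∈ C ∩ (u ∩ v) := ⟨ht', h ht', htv⟩
      rw [hdis] at this
      exact this
    · have : (x, t) ∈ C ∩ (u ∩ v) := ⟨ht, htu, h ht⟩
      rw [hdis] at this
      exact this
  have hW : IsOpen {x | ¬ ∃ t, (x, t) ∈ C} := by
    rw [isOpen_iff_mem_nhds]
    intro x0 hx0
    filter_upwards [hclosed x0] with x hx h
    exact hx0 (hx h)
  have hclopen : IsClopen {x | ∃ t, (x, t) ∈ C ∧ (x, t) ∈ u} := by
    refine ⟨⟨?_⟩, hU⟩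
    convert hV.union hW using 1
    ext x
    constructor
    · intro hx
      by_cases h : ∃ t, (x, t) ∈ C
      · left
        obtain ⟨t, ht⟩ := h
        rcases huv ht with h | h
        · exact absurd ⟨t, ht, h⟩ hx
        · exact ⟨t, ht, h⟩
      · exact Or.inr h
    · rintro (h | h) h'
      · exact hdisj x h' h
      · exact h (h'.imp fun t ht => ht.1)
  rcases isClopen_iff.mp hclopen with h | h
  · right
    rintro ⟨x, t⟩ ht
    rcases huv ht with h' | h'
    · have : x ∈ {x | ∃ t, (x, t) ∈ C ∧ (x, t) ∈ u} := ⟨t, ht, h'⟩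
      rw [h] at this
      exact this.elim
    · exact h'
  · left
    rintro ⟨x, t⟩ ht
    rcases huv ht with h' | h'
    · exact h'
    · have : x ∈ {x | ∃ t, (x, t) ∈ C ∧ (x, t) ∈ u} := by rw [h]; trivial
      exact (hdisj x this ⟨t, ht, h'⟩).elim

/-- Cylindrical-type covering by connected semialgebraic sets with constant signs. -/
def HasCover (n : ℕ) : Prop :=
  ∀ F : Finset (MvPolynomial (Fin n) ℝ), ∃ K : Set (Set (Fin n → ℝ)), K.Finite ∧
    (∀ A ∈ K, IsSemialgebraic (Fin n) A ∧ IsPreconnected A ∧ ∀ f ∈ F, ∀ x ∈ A, ∀ y ∈ A,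
      SignType.sign (MvPolynomial.eval x f) = SignType.sign (MvPolynomial.eval y f)) ∧
    ∀ x, ∃ A ∈ K, x ∈ A

lemma sa_univ (ι : Type) [Fintype ι] : IsSemialgebraic ι Set.univ := by
  have := IsSemialgebraic.basic (ι := ι) 1
  simpa using this

lemma sa_empty (ι : Type) [Fintype ι] : IsSemialgebraic ι ∅ := by
  simpa using (sa_univ ι).compl

lemma sa_inter {ι : Type} [Fintype ι] {s t : Set (ι → ℝ)} (hs : IsSemialgebraic ι s)
    (ht : IsSemialgebraic ι t) : IsSemialgebraic ι (s ∩ t) := by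
  have := (hs.compl.union ht.compl).compl
  simpa [Set.compl_union] using this

lemma sa_sUnion {ι : Type} [Fintype ι] {K : Set (Set (ι → ℝ))} (hK : K.Finite)
    (h : ∀ A ∈ K, IsSemialgebraic ι A) : IsSemialgebraic ι (⋃₀ K) := by
  induction K, hK using Set.Finite.induction_on with
  | empty => simpa using sa_empty ι
  | insert ha hs ih =>
    rw [Set.sUnion_insert]
    exact (h _ (Set.mem_insert _ _)).union (ih fun A hA => h A (Set.mem_insert_of_mem _ hA))

lemma sa_iInter {ι : Type} [Fintype ι] {κ : Type*} (T : Finset κ) (s : κ → Set (ι → ℝ))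
    (h : ∀ k ∈ T, IsSemialgebraic ι (s k)) : IsSemialgebraic ι {x | ∀ k ∈ T, x ∈ s k} := by
  classical
  induction T using Finset.induction_on with
  | empty => simpa using sa_univ ι
  | insert a T ha ih =>
    have := sa_inter (h a (Finset.mem_insert_self _ _))
      (ih fun k hk => h k (Finset.mem_insert_of_mem hk))
    convert this using 1
    ext x
    simp

lemma sa_sign {ι : Type} [Fintype ι] (p : MvPolynomial ι ℝ) (ε : SignType) :
    IsSemialgebraic ι {x | SignType.sign (MvPolynomial.eval x p) = ε} := by
  have h1 := IsSemialgebraic.basic p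
  have h2 := IsSemialgebraic.basic (-p)
  cases ε with
  | pos => 
    convert h1 using 1
    ext x
    exact sign_eq_one_iff
  | neg =>
    convert h2 using 1
    ext x
    simpa using sign_eq_neg_one_iff (a := MvPolynomial.eval x p)
  | zero =>
    convert (h1.union h2).compl using 1
    ext x
    have := sign_eq_zero_iff (a := MvPolynomial.eval x p)
    simp only [Set.mem_ofPred_eq, Set.mem_compl_iff, Set.mem_union, map_neg]
    refine this.trans ?_
    constructor
    · intro h; rw [h]; simp
    · intro h; push Not at h; linarith

lemma sa_tail {n : ℕ} {A : Set (Fin n → ℝ)} (hA : IsSemialgebraic (Fin n) A) :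
    IsSemialgebraic (Fin (n + 1)) {y | Fin.tail y ∈ A} := by
  induction hA with
  | basic p =>
    convert IsSemialgebraic.basic (MvPolynomial.rename Fin.succ p) using 1
    ext y
    simp only [Set.mem_ofPred_eq, MvPolynomial.eval_rename]
    rfl
  | compl _ ih => exact ih.compl
  | union _ _ ih1 ih2 => exact ih1.union ih2

/-- A semialgebraic set is described by the signs of finitely many polynomials. -/
lemma sa_signs {n : ℕ} {S : Set (Fin n → ℝ)} (hS : IsSemialgebraic (Fin n) S) :
    ∃ F : Finset (MvPolynomial (Fin n) ℝ), ∀ x y, (∀ f ∈ F,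
      SignType.sign (MvPolynomial.eval x f) = SignType.sign (MvPolynomial.eval y f)) →
      (x ∈ S ↔ y ∈ S) := by
  classical
  induction hS with
  | basic p =>
    refine ⟨{p}, fun x y h => ?_⟩
    have := h p (by simp)
    simp only [Set.mem_ofPred_eq]
    rw [← sign_eq_one_iff, this, sign_eq_one_iff]
  | compl _ ih =>
    obtain ⟨F, hF⟩ := ih
    exact ⟨F, fun x y h => not_congr (hF x y h)⟩
  | union _ _ ih1 ih2 =>
    obtain ⟨F, hF⟩ := ih1
    obtain ⟨F', hF'⟩ := ih2
    refine ⟨F ∪ F', fun x y h => or_congr (hF x y fun f hf => h f (by simp [hf]))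
      (hF' x y fun f hf => h f (by simp [hf]))⟩

lemma components_of_cover (n : ℕ) (hn : HasCover n) (S : Set (Fin n → ℝ))
    (hS : IsSemialgebraic (Fin n) S) :
    (∀ x ∈ S, IsSemialgebraic (Fin n) (connectedComponentIn S x)) ∧
      {C : Set (Fin n → ℝ) | ∃ x ∈ S, C = connectedComponentIn S x}.Finite := by
  obtain ⟨F, hF⟩ := sa_signs hS
  obtain ⟨K, hK, hKA, hcov⟩ := hn F
  have key : ∀ x ∈ S, connectedComponentIn S x =
      ⋃₀ {A ∈ K | A ⊆ connectedComponentIn S x} := by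
    intro x hx
    apply subset_antisymm
    · intro y hy
      obtain ⟨A, hA, hyA⟩ := hcov y
      refine ⟨A, ⟨hA, ?_⟩, hyA⟩
      have hyS := connectedComponentIn_subset _ _ hy
      rw [connectedComponentIn_eq hy]
      apply (hKA A hA).2.1.subset_connectedComponentIn hyA
      intro z hz
      exact (hF y z fun f hf => (hKA A hA).2.2 f hf y hyA z hz).mp hyS
    · exact Set.sUnion_subset fun A hA => hA.2
  constructor
  · intro x hx
    rw [key x hx]
    exact sa_sUnion (hK.subset fun A hA => hA.1) fun A hA => (hKA A hA.1).1
  · apply (hK.finite_subsets.image Set.sUnion).subset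
    rintro C ⟨x, hx, rfl⟩
    exact ⟨{A ∈ K | A ⊆ connectedComponentIn S x}, fun A hA => hA.1, (key x hx).symm⟩
section Count
open Polynomial

/-- Matrix of the linear map `(v, u) ↦ v * derivative q + u * q` with `v, u` of degree at most `r`. -/
noncomputable def sylM {R : Type*} [CommRing R] (q : R[X]) (D r : ℕ) :
    Matrix (Fin (D + r + 1)) (Fin (r + 1) ⊕ Fin (r + 1)) R :=
  Matrix.of fun k j => Sum.elim (fun i : Fin (r + 1) => (X ^ (i : ℕ) * derivative q).coeff k)
    (fun i : Fin (r + 1) => (X ^ (i : ℕ) * q).coeff k) j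

/-- The Gram determinant of `sylM`. -/
noncomputable def gramDet {R : Type*} [CommRing R] (q : R[X]) (D r : ℕ) : R :=
  ((sylM q D r).transpose * sylM q D r).det

lemma sylM_map {R S : Type*} [CommRing R] [CommRing S] (φ : R →+* S) (q : R[X]) (D r : ℕ) :
    (sylM q D r).map φ = sylM (q.map φ) D r := by
  ext k j
  rcases j with i | i
  · simp [sylM, ← coeff_map, Polynomial.map_mul, derivative_map]
  · simp [sylM, ← coeff_map, Polynomial.map_mul]

lemma gramDet_map {R S : Type*} [CommRing R] [CommRing S] (φ : R →+* S) (q : R[X]) (D r : ℕ) :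
    φ (gramDet q D r) = gramDet (q.map φ) D r := by
  rw [gramDet, gramDet, RingHom.map_det, ← sylM_map]
  simp [Matrix.transpose_map, Matrix.map_mul]

/-- polynomial with given coefficients -/
noncomputable def polyOf {R : Type*} [CommRing R] {r : ℕ} (w : Fin (r + 1) → R) : R[X] :=
  ∑ i : Fin (r + 1), C (w i) * X ^ (i : ℕ)

lemma polyOf_coeff {R : Type*} [CommRing R] {r : ℕ} (w : Fin (r + 1) → R) (i : Fin (r + 1)) :
    (polyOf w).coeff i = w i := by
  simp [polyOf, coeff_C_mul, coeff_X_pow, Fin.val_inj]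

lemma polyOf_natDegree {R : Type*} [CommRing R] {r : ℕ} (w : Fin (r + 1) → R) :
    (polyOf w).natDegree ≤ r := by
  apply natDegree_sum_le_of_forall_le
  intro i _
  exact (natDegree_C_mul_X_pow_le _ _).trans (by omega)

lemma polyOf_of {R : Type*} [CommRing R] {r : ℕ} (p : R[X]) (hp : p.natDegree ≤ r) :
    polyOf (fun i : Fin (r + 1) => p.coeff i) = p := by
  rw [polyOf, Fin.sum_univ_eq_sum_range (fun i => C (p.coeff i) * X ^ i)]
  exact (p.as_sum_range_C_mul_X_pow' (by omega)).symm

lemma sylM_mulVec {R : Type*} [CommRing R] (q : R[X]) (D r : ℕ)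
    (w : Fin (r + 1) ⊕ Fin (r + 1) → R) (k : Fin (D + r + 1)) :
    (sylM q D r).mulVec w k = (polyOf (fun i => w (Sum.inl i)) * derivative q +
      polyOf (fun i => w (Sum.inr i)) * q).coeff k := by
  simp only [sylM, Matrix.mulVec, dotProduct, polyOf, Finset.sum_mul, mul_assoc, coeff_add,
    finsetSum_coeff, coeff_C_mul, Fintype.sum_sum_type, Matrix.of_apply, Sum.elim_inl,
    Sum.elim_inr]
  congr 1 <;> exact Finset.sum_congr rfl fun i _ => mul_comm _ _

lemma sylM_mulVec_eq_zero {R : Type*} [CommRing R] (q : R[X]) (D r : ℕ) (hq : q.natDegree ≤ D)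
    (w : Fin (r + 1) ⊕ Fin (r + 1) → R) :
    (sylM q D r).mulVec w = 0 ↔ polyOf (fun i => w (Sum.inl i)) * derivative q +
      polyOf (fun i => w (Sum.inr i)) * q = 0 := by
  constructor
  · intro h
    ext k
    by_cases hk : k < D + r + 1
    · rw [← sylM_mulVec q D r w ⟨k, hk⟩, h]; simp
    · rw [coeff_eq_zero_of_natDegree_lt]; · simp
      refine lt_of_le_of_lt (natDegree_add_le_of_degree_le (n := D + r) ?_ ?_) (by omega)
      · refine natDegree_mul_le.trans ?_
        have := polyOf_natDegree (fun i => w (Sum.inl i))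
        have := natDegree_derivative_le q
        omega
      · refine natDegree_mul_le.trans ?_
        have := polyOf_natDegree (fun i => w (Sum.inr i))
        omega
  · intro h
    ext k
    rw [sylM_mulVec, h]; simp

lemma gramDet_eq_zero_iff (q : ℝ[X]) (D r : ℕ) :
    gramDet q D r = 0 ↔ ∃ w, w ≠ 0 ∧ (sylM q D r).mulVec w = 0 := by
  rw [gramDet, ← Matrix.exists_mulVec_eq_zero_iff]
  have := Matrix.conjTranspose_mul_self_mulVec_eq_zero (sylM q D r)
  simp only [Matrix.conjTranspose_eq_transpose_of_trivial] at this
  simp only [this]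

/-- number of distinct complex roots -/
noncomputable def cRoots (q : ℝ[X]) : Finset ℂ := (q.map Complex.ofRealHom).roots.toFinset

lemma map_ne_zero' {q : ℝ[X]} (hq : q ≠ 0) : q.map Complex.ofRealHom ≠ 0 :=
  (Polynomial.map_ne_zero_iff Complex.ofRealHom.injective).mpr hq

lemma mem_cRoots {q : ℝ[X]} (hq : q ≠ 0) (z : ℂ) :
    z ∈ cRoots q ↔ (q.map Complex.ofRealHom).eval z = 0 := by
  simp [cRoots, mem_roots (map_ne_zero' hq)]

lemma gramDet_of_le (q : ℝ[X]) (hq : q ≠ 0) (D r : ℕ) (hD : q.natDegree ≤ D)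
    (h : (cRoots q).card ≤ r) : gramDet q D r = 0 := by
  rw [gramDet_eq_zero_iff]
  set f := q.map Complex.ofRealHom with hf
  have hf0 : f ≠ 0 := map_ne_zero' hq
  set v : ℂ[X] := ∏ z ∈ cRoots q, (X - C z) with hv
  have hv0 : v ≠ 0 := by rw [hv, Finset.prod_ne_zero_iff]; intro z _; exact X_sub_C_ne_zero z
  have hvd : v.natDegree = (cRoots q).card := by
    rw [hv, natDegree_prod _ _ fun z _ => X_sub_C_ne_zero z]; simp
  have hdvd : f ∣ v * derivative f := by
    by_cases hd : derivative f = 0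
    · simp [hd]
    have hvf : v * derivative f ≠ 0 := mul_ne_zero hv0 hd
    rw [(IsAlgClosed.splits f).dvd_iff_roots_le_roots hf0 hvf]
    rw [Multiset.le_iff_count]
    intro z
    rw [count_roots, count_roots, rootMultiplicity_mul hvf]
    by_cases hz : f.IsRoot z
    · rw [derivative_rootMultiplicity_of_root hz]
      have : 0 < rootMultiplicity z v := by
        rw [rootMultiplicity_pos hv0]
        rw [hv, IsRoot, eval_prod]
        apply Finset.prod_eq_zero (i := z)
        · rw [mem_cRoots hq]; exact hz
        · simp
      omega
    · rw [rootMultiplicity_eq_zero hz]; omega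
  obtain ⟨u, hu⟩ := hdvd
  have hud : u.natDegree ≤ r := by
    by_cases hu0 : u = 0
    · simp [hu0]
    have h1 := congrArg natDegree hu
    rw [natDegree_mul hf0 hu0] at h1
    have h2 := natDegree_mul_le (p := v) (q := derivative f)
    have := natDegree_derivative_le f
    omega
  have hvr : v.natDegree ≤ r := by omega
  let w : Fin (r + 1) ⊕ Fin (r + 1) → ℂ :=
    Sum.elim (fun i => v.coeff i) (fun i => - u.coeff i)
  have hw : (sylM f D r).mulVec w = 0 := by
    rw [sylM_mulVec_eq_zero f D r (by rw [hf]; exact natDegree_map_le.trans hD)]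
    have e1 : polyOf (fun i => w (Sum.inl i)) = v := polyOf_of v hvr
    have e2 : polyOf (fun i => w (Sum.inr i)) = -u := by
      have := polyOf_of (-u) (r := r) (by rwa [natDegree_neg])
      simpa [w] using this
    rw [e1, e2, hu]; ring
  have hw0 : w ≠ 0 := by
    intro h0
    apply hv0
    rw [← polyOf_of v hvr]
    have : (fun i : Fin (r + 1) => v.coeff i) = 0 := by
      ext i
      exact congrFun h0 (Sum.inl i)
    rw [this]; simp [polyOf]
  rw [hf, ← sylM_map] at hw
  have hre : (sylM q D r).mulVec (fun j => (w j).re) = 0 := by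
    ext k
    have := congrArg Complex.re (congrFun hw k)
    simpa [Matrix.mulVec, dotProduct] using this
  have him : (sylM q D r).mulVec (fun j => (w j).im) = 0 := by
    ext k
    have := congrArg Complex.im (congrFun hw k)
    simpa [Matrix.mulVec, dotProduct] using this
  by_cases h1 : (fun j => (w j).re) = 0
  · refine ⟨_, ?_, him⟩
    intro h2
    apply hw0
    ext j
    exact Complex.ext (congrFun h1 j) (congrFun h2 j)
  · exact ⟨_, h1, hre⟩

lemma le_of_gramDet (q : ℝ[X]) (hq : q ≠ 0) (D r : ℕ) (hD : q.natDegree ≤ D)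
    (h : gramDet q D r = 0) : (cRoots q).card ≤ r := by
  rw [gramDet_eq_zero_iff] at h
  obtain ⟨w, hw0, hw⟩ := h
  rw [sylM_mulVec_eq_zero q D r hD] at hw
  set v := polyOf (fun i => w (Sum.inl i)) with hv
  set u := polyOf (fun i => w (Sum.inr i)) with hu
  have hv0 : v ≠ 0 := by
    intro hv0
    rw [hv0, zero_mul, zero_add, mul_eq_zero, or_iff_left hq] at hw
    apply hw0
    ext j
    rcases j with i | i
    · rw [← polyOf_coeff (fun i => w (Sum.inl i)) i, ← hv, hv0]; simp
    · rw [← polyOf_coeff (fun i => w (Sum.inr i)) i, ← hu, hw]; simp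
  set f := q.map Complex.ofRealHom with hf
  have hf0 : f ≠ 0 := map_ne_zero' hq
  have hV0 := map_ne_zero' hv0
  have hmap := congrArg (Polynomial.map Complex.ofRealHom) hw
  simp only [Polynomial.map_add, Polynomial.map_mul, ← derivative_map, Polynomial.map_zero] at hmap
  rw [← hf] at hmap
  have hsub : cRoots q ⊆ (v.map Complex.ofRealHom).roots.toFinset := by
    intro z hz
    rw [mem_cRoots hq] at hz
    rw [Multiset.mem_toFinset, mem_roots hV0, IsRoot]
    have hfr : f.IsRoot z := hz
    have hd : derivative f ≠ 0 := by
      intro hd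
      have := derivative_eq_zero.mp hd
      obtain ⟨c, hc⟩ := natDegree_eq_zero.mp this
      rw [← hc] at hfr hf0
      simp at hfr
      simp [hfr] at hf0
    have hdv : f ∣ v.map Complex.ofRealHom * derivative f :=
      ⟨- u.map Complex.ofRealHom, by linear_combination hmap⟩
    have hle := rootMultiplicity_le_rootMultiplicity_of_dvd (mul_ne_zero hV0 hd) hdv z
    rw [rootMultiplicity_mul (mul_ne_zero hV0 hd), derivative_rootMultiplicity_of_root hfr] at hle
    have hp := (rootMultiplicity_pos hf0).mpr hfr
    exact (rootMultiplicity_pos hV0).mp (by omega)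
  calc (cRoots q).card ≤ _ := Finset.card_le_card hsub
    _ ≤ _ := Multiset.toFinset_card_le _
    _ ≤ _ := card_roots' _
    _ ≤ _ := natDegree_map_le
    _ ≤ r := polyOf_natDegree _

lemma cRoots_card_le (q : ℝ[X]) : (cRoots q).card ≤ q.natDegree :=
  (Multiset.toFinset_card_le _).trans ((card_roots' _).trans natDegree_map_le)

lemma card_eq_of_gramDet (p q : ℝ[X]) (hp : p ≠ 0) (hq : q ≠ 0) (D : ℕ)
    (hpD : p.natDegree ≤ D) (hqD : q.natDegree ≤ D)
    (h : ∀ r ≤ D, gramDet p D r = 0 ↔ gramDet q D r = 0) :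
    (cRoots p).card = (cRoots q).card := by
  apply le_antisymm
  · exact le_of_gramDet p hp D _ hpD ((h _ ((cRoots_card_le q).trans hqD)).mpr
      (gramDet_of_le q hq D _ hqD le_rfl))
  · exact le_of_gramDet q hq D _ hqD ((h _ ((cRoots_card_le p).trans hpD)).mp
      (gramDet_of_le p hp D _ hpD le_rfl))

end Count
section Local
open Polynomial Filter Topology

variable {X R : Type*} [TopologicalSpace X] [CommRing R]

/-- All specializations are nonzero and of the same degree. -/
structure GoodFam (ev : X → R →+* ℝ) (f : R[X]) : Prop where
  ne : ∀ x, f.map (ev x) ≠ 0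
  deg : ∀ x y, (f.map (ev x)).natDegree = (f.map (ev y)).natDegree

lemma cont_eval (ev : X → R →+* ℝ) (hev : ∀ a, Continuous fun x => ev x a) (f : R[X]) :
    Continuous fun p : X × ℝ => (f.map (ev p.1)).eval p.2 := by
  simp only [eval_map, eval₂_eq_sum_range]
  refine continuous_finsetSum _ fun i _ => ?_
  have := hev (f.coeff i)
  fun_prop

lemma cont_cEval (ev : X → R →+* ℝ) (hev : ∀ a, Continuous fun x => ev x a) (f : R[X]) (z : ℂ) :
    Continuous fun x => ((f.map (ev x)).map Complex.ofRealHom).eval z := by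
  simp only [Polynomial.map_map, eval_map, eval₂_eq_sum_range]
  refine continuous_finsetSum _ fun i _ => ?_
  have := hev (f.coeff i)
  simp only [RingHom.comp_apply, Complex.ofRealHom_eq_coe]
  fun_prop

lemma prod_lower (z : ℂ) (r : ℝ) (hr : 0 ≤ r) (s : Multiset ℂ) (h : ∀ w ∈ s, r ≤ ‖z - w‖) :
    r ^ s.card ≤ ‖(s.map (fun w => z - w)).prod‖ := by
  induction s using Multiset.induction_on with
  | empty => simp
  | cons a s ih =>
    simp only [Multiset.card_cons, Multiset.map_cons, Multiset.prod_cons, norm_mul, pow_succ]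
    rw [mul_comm]
    apply mul_le_mul (h a (by simp)) (ih fun w hw => h w (by simp [hw])) (by positivity)
      (norm_nonneg _)

lemma root_near (ev : X → R →+* ℝ) (hev : ∀ a, Continuous fun x => ev x a) (f : R[X])
    (hf : GoodFam ev f) (x0 : X) (z0 : ℂ) (hz : z0 ∈ cRoots (f.map (ev x0))) (r : ℝ) (hr : 0 < r) :
    ∀ᶠ x in 𝓝 x0, ∃ z ∈ cRoots (f.map (ev x)), ‖z - z0‖ < r := by
  set d := (f.map (ev x0)).natDegree with hd
  have hlc : ∀ x, ((f.map (ev x)).map Complex.ofRealHom).leadingCoeff = (ev x (f.coeff d) : ℂ) := by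
    intro x
    rw [leadingCoeff_map_of_injective Complex.ofRealHom.injective, leadingCoeff, hf.deg x x0, ← hd,
      coeff_map]
    rfl
  have hc : Continuous fun x => ‖((f.map (ev x)).map Complex.ofRealHom).eval z0‖ -
      ‖(ev x (f.coeff d) : ℂ)‖ * r ^ d := by
    have h1 := cont_cEval ev hev f z0
    have h2 := hev (f.coeff d)
    fun_prop
  have hneg : ‖((f.map (ev x0)).map Complex.ofRealHom).eval z0‖ -
      ‖(ev x0 (f.coeff d) : ℂ)‖ * r ^ d < 0 := by
    rw [(mem_cRoots (hf.ne x0) z0).mp hz, norm_zero, ← hlc]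
    have : 0 < ‖((f.map (ev x0)).map Complex.ofRealHom).leadingCoeff‖ :=
      norm_pos_iff.mpr (leadingCoeff_ne_zero.mpr (map_ne_zero' (hf.ne x0)))
    have : 0 < r ^ d := by positivity
    nlinarith
  filter_upwards [hc.continuousAt.eventually_lt_const hneg] with x hx
  by_contra! hcon
  have hs := IsAlgClosed.splits ((f.map (ev x)).map Complex.ofRealHom)
  rw [hs.eval_eq_prod_roots, norm_mul, hlc] at hx
  have hl := prod_lower z0 r hr.le ((f.map (ev x)).map Complex.ofRealHom).roots (by
    intro w hw
    rw [norm_sub_rev]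
    exact hcon w (by simpa [cRoots] using hw))
  rw [← hs.natDegree_eq_card_roots, natDegree_map_eq_of_injective Complex.ofRealHom.injective,
    hf.deg x x0, ← hd] at hl
  have := mul_le_mul_of_nonneg_left hl (norm_nonneg (ev x (f.coeff d) : ℂ))
  linarith

lemma roots_bij (ev : X → R →+* ℝ) (hev : ∀ a, Continuous fun x => ev x a) (f : R[X])
    (hf : GoodFam ev f)
    (hcard : ∀ x y, (cRoots (f.map (ev x))).card = (cRoots (f.map (ev y))).card) (x0 : X) :
    ∃ s > 0, (∀ z ∈ cRoots (f.map (ev x0)), ∀ w ∈ cRoots (f.map (ev x0)), ‖z - w‖ < 2 * s → z = w) ∧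
    ∀ r, 0 < r → r ≤ s → ∀ᶠ x in 𝓝 x0,
      (∀ z0 ∈ cRoots (f.map (ev x0)), ∃ z ∈ cRoots (f.map (ev x)), ‖z - z0‖ < r) ∧
      (∀ z ∈ cRoots (f.map (ev x)), ∃ z0 ∈ cRoots (f.map (ev x0)), ‖z - z0‖ < r) ∧
      (∀ z0 ∈ cRoots (f.map (ev x0)), ∀ z ∈ cRoots (f.map (ev x)), ∀ w ∈ cRoots (f.map (ev x)),
        ‖z - z0‖ < r → ‖w - z0‖ < r → z = w) := by
  classical
  set Z := cRoots (f.map (ev x0)) with hZ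
  have h1 : ∀ᶠ s in 𝓝[>] (0 : ℝ), ∀ p ∈ Z.offDiag, 2 * s < ‖p.1 - p.2‖ := by
    rw [Filter.eventually_all_finset]
    intro p hp
    have hne : 0 < ‖p.1 - p.2‖ := by
      rw [Finset.mem_offDiag] at hp
      exact norm_pos_iff.mpr (sub_ne_zero.mpr hp.2.2)
    have : Tendsto (fun s : ℝ => 2 * s) (𝓝[>] 0) (𝓝 (2 * 0)) :=
      ((continuous_const.mul continuous_id).tendsto 0).mono_left nhdsWithin_le_nhds
    exact this.eventually_lt_const (by simpa using hne)
  obtain ⟨s, hs, hs0⟩ := (h1.and self_mem_nhdsWithin).exists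
  have hs0 : 0 < s := hs0
  have hsep : ∀ z ∈ Z, ∀ w ∈ Z, ‖z - w‖ < 2 * s → z = w := by
    intro z hz w hw h
    by_contra hne
    have := hs (z, w) (Finset.mem_offDiag.mpr ⟨hz, hw, hne⟩)
    simp only at this
    linarith
  refine ⟨s, hs0, hsep, fun r hr hrs => ?_⟩
  have h2 : ∀ᶠ x in 𝓝 x0, ∀ z0 ∈ Z, ∃ z ∈ cRoots (f.map (ev x)), ‖z - z0‖ < r := by
    rw [Filter.eventually_all_finset]
    intro z0 hz0
    exact root_near ev hev f hf x0 z0 hz0 r hr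
  filter_upwards [h2] with x hx
  choose! φ hφ hφr using hx
  have hinj : Set.InjOn φ Z := by
    intro z hz w hw h
    apply hsep z hz w hw
    have a1 := hφr z hz
    have a2 := hφr w hw
    rw [h] at a1
    calc ‖z - w‖ = ‖(φ w - w) - (φ w - z)‖ := by congr 1; ring
      _ ≤ _ := norm_sub_le _ _
      _ < 2 * s := by linarith
  have himg : Z.image φ = cRoots (f.map (ev x)) := by
    apply Finset.eq_of_subset_of_card_le
    · intro z hz
      obtain ⟨w, hw, rfl⟩ := Finset.mem_image.mp hz
      exact hφ w hw
    · rw [Finset.card_image_of_injOn hinj, hcard x x0]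
  have hsurj : ∀ z ∈ cRoots (f.map (ev x)), ∃ w ∈ Z, φ w = z := by
    intro z hz
    rw [← himg] at hz
    exact Finset.mem_image.mp hz
  have huniq : ∀ z0 ∈ Z, ∀ z ∈ cRoots (f.map (ev x)), ‖z - z0‖ < r → z = φ z0 := by
    intro z0 hz0 z hz h
    obtain ⟨w, hw, rfl⟩ := hsurj z hz
    congr 1
    apply hsep w hw z0 hz0
    have a1 := hφr w hw
    calc ‖w - z0‖ = ‖(φ w - z0) - (φ w - w)‖ := by congr 1; ring
      _ ≤ _ := norm_sub_le _ _
      _ < 2 * s := by linarith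
  refine ⟨fun z0 hz0 => ⟨φ z0, hφ z0 hz0, hφr z0 hz0⟩, fun z hz => ?_, ?_⟩
  · obtain ⟨w, hw, rfl⟩ := hsurj z hz
    exact ⟨w, hw, hφr w hw⟩
  · intro z0 hz0 z hz w hw h1 h2
    rw [huniq z0 hz0 z hz h1, huniq z0 hz0 w hw h2]

lemma real_mem_cRoots {q : ℝ[X]} (hq : q ≠ 0) (t : ℝ) : (t : ℂ) ∈ cRoots q ↔ q.eval t = 0 := by
  rw [mem_cRoots hq]
  have : (q.map Complex.ofRealHom).eval (t : ℂ) = ((q.eval t : ℝ) : ℂ) :=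
    Polynomial.eval_map_apply (f := Complex.ofRealHom) (p := q) t
  rw [this]
  exact Complex.ofReal_eq_zero

lemma conj_mem_cRoots {q : ℝ[X]} (hq : q ≠ 0) (z : ℂ) (hz : z ∈ cRoots q) :
    starRingEnd ℂ z ∈ cRoots q := by
  rw [mem_cRoots hq, eval_map] at hz ⊢
  have := hom_eval₂ q Complex.ofRealHom (starRingEnd ℂ) z
  rw [hz, map_zero] at this
  have h2 : (starRingEnd ℂ).comp Complex.ofRealHom = Complex.ofRealHom := by
    ext x; simp
  rw [h2] at this
  exact this.symm

/-- The standing hypotheses on a finite family of polynomials. -/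
structure Setup (ev : X → R →+* ℝ) (F : Finset R[X]) (P Q : R[X]) : Prop where
  hev : ∀ a, Continuous fun x => ev x a
  hF : ∀ f ∈ F, (∀ x, f.map (ev x) = 0) ∨ (GoodFam ev f ∧ f ∣ P)
  hQ : Q = P * derivative (Polynomial.X * P)
  good : GoodFam ev Q
  card : ∀ x y, (cRoots (Q.map (ev x))).card = (cRoots (Q.map (ev y))).card

lemma sign_stable {ev : X → R →+* ℝ} {F : Finset R[X]} (hev : ∀ a, Continuous fun x => ev x a)
    (x0 : X) (t0 : ℝ) : ∀ᶠ p in 𝓝 (x0, t0), ∀ f ∈ F, (f.map (ev x0)).eval t0 ≠ 0 →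
      SignType.sign ((f.map (ev p.1)).eval p.2) = SignType.sign ((f.map (ev x0)).eval t0) := by
  rw [Filter.eventually_all_finset]
  intro f hf
  by_cases h : (f.map (ev x0)).eval t0 = 0
  · simp [h]
  have h1 : ContinuousAt (fun p : X × ℝ => SignType.sign ((f.map (ev p.1)).eval p.2)) (x0, t0) :=
    ContinuousAt.comp (g := SignType.sign) (f := fun p : X × ℝ => (f.map (ev p.1)).eval p.2)
      (continuousAt_sign_of_ne_zero h) (cont_eval ev hev f).continuousAt
  have h2 := h1.eventually (show {SignType.sign ((f.map (ev x0)).eval t0)} ∈ 𝓝 _ from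
    mem_nhds_discrete.mpr rfl)
  filter_upwards [h2] with p hp _
  exact hp

lemma local_root {ev : X → R →+* ℝ} {F : Finset R[X]} {P Q : R[X]} (S : Setup ev F P Q)
    (x0 : X) (ξ : ℝ) (hξ : (Q.map (ev x0)).eval ξ = 0) :
    ∃ s > 0, ∀ r, 0 < r → r ≤ s → ∀ᶠ x in 𝓝 x0,
      (∃ t, |t - ξ| < r ∧ (Q.map (ev x)).eval t = 0) ∧
      ∀ t, |t - ξ| < r → (Q.map (ev x)).eval t = 0 → ∀ f ∈ F,
        SignType.sign ((f.map (ev x)).eval t) = SignType.sign ((f.map (ev x0)).eval ξ) := by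
  obtain ⟨s, hs, hsep, hbij⟩ := roots_bij ev S.hev Q S.good S.card x0
  have hst := sign_stable (F := F) S.hev x0 ξ
  rw [nhds_prod_eq, Filter.eventually_iff, Filter.mem_prod_iff] at hst
  obtain ⟨a, ha, b, hb, hab⟩ := hst
  obtain ⟨r1, hr1, hrb⟩ := Metric.mem_nhds_iff.mp hb
  have hξ' : (ξ : ℂ) ∈ cRoots (Q.map (ev x0)) := (real_mem_cRoots (S.good.ne x0) ξ).mpr hξ
  refine ⟨min s r1, lt_min hs hr1, fun r hr hrs => ?_⟩
  have hF : ∀ᶠ x in 𝓝 x0, ∀ f ∈ F, (f.map (ev x0)).eval ξ = 0 →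
      (∀ x, f.map (ev x) = 0) ∨ ∃ z ∈ cRoots (f.map (ev x)), ‖z - ξ‖ < r := by
    rw [Filter.eventually_all_finset]
    intro f hf
    rcases S.hF f hf with h | ⟨hg, -⟩
    · exact Eventually.of_forall fun x _ => Or.inl h
    · by_cases h0 : (f.map (ev x0)).eval ξ = 0
      · filter_upwards [root_near ev S.hev f hg x0 ξ ((real_mem_cRoots (hg.ne x0) ξ).mpr h0) r hr]
          with x hx _
        exact Or.inr hx
      · simp [h0]
  filter_upwards [hbij r hr (hrs.trans (min_le_left _ _)), hF, ha] with x ⟨h1, h2, h3⟩ hFx hxa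
  constructor
  · obtain ⟨z, hz, hzr⟩ := h1 ξ hξ'
    have hconj := conj_mem_cRoots (S.good.ne x) z hz
    have hzr' : ‖starRingEnd ℂ z - ξ‖ < r := by
      have : starRingEnd ℂ z - ξ = starRingEnd ℂ (z - ξ) := by simp
      rw [this, Complex.norm_conj]
      exact hzr
    have heq := h3 ξ hξ' _ hconj z hz hzr' hzr
    obtain ⟨t, rfl⟩ := Complex.conj_eq_iff_real.mp heq
    refine ⟨t, ?_, (real_mem_cRoots (S.good.ne x) t).mp hz⟩
    rw [← Complex.ofReal_sub, Complex.norm_real] at hzr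
    exact hzr
  · intro t ht htQ f hf
    have htz : (t : ℂ) ∈ cRoots (Q.map (ev x)) := (real_mem_cRoots (S.good.ne x) t).mpr htQ
    by_cases h0 : (f.map (ev x0)).eval ξ = 0
    · rw [h0]
      rcases hFx f hf h0 with h | ⟨z, hz, hzr⟩
      · rw [h x]; simp
      · rcases S.hF f hf with h | ⟨hg, hdvd⟩
        · rw [h x]; simp
        have hzQ : z ∈ cRoots (Q.map (ev x)) := by
          rw [mem_cRoots (S.good.ne x)]
          rw [mem_cRoots (hg.ne x)] at hz
          have hd : f ∣ Q := by rw [S.hQ]; exact hdvd.mul_right _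
          have hd' := Polynomial.map_dvd Complex.ofRealHom (Polynomial.map_dvd (ev x) hd)
          exact eval_eq_zero_of_dvd_of_eval_eq_zero hd' hz
        have := h3 ξ hξ' z hzQ t htz hzr (by
          rw [← Complex.ofReal_sub, Complex.norm_real]; exact ht)
        rw [this, real_mem_cRoots (hg.ne x)] at hz
        rw [hz]
    · have hmem : (x, t) ∈ a ×ˢ b := ⟨hxa, hrb (by
        rw [Metric.mem_ball, Real.dist_eq]
        exact lt_of_lt_of_le ht (hrs.trans (min_le_right _ _)))⟩
      exact hab hmem f hf h0

lemma roots_close {ev : X → R →+* ℝ} {F : Finset R[X]} {P Q : R[X]} (S : Setup ev F P Q)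
    (x0 : X) : ∃ s > 0, ∀ r, 0 < r → r ≤ s → ∀ᶠ x in 𝓝 x0, ∀ t : ℝ, (Q.map (ev x)).eval t = 0 →
      ∃ ξ : ℝ, (Q.map (ev x0)).eval ξ = 0 ∧ |t - ξ| < r := by
  obtain ⟨s, hs, hsep, hbij⟩ := roots_bij ev S.hev Q S.good S.card x0
  refine ⟨s, hs, fun r hr hrs => ?_⟩
  filter_upwards [hbij r hr hrs] with x ⟨h1, h2, h3⟩ t ht
  obtain ⟨z, hz, hzr⟩ := h2 t ((real_mem_cRoots (S.good.ne x) t).mpr ht)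
  have hconj := conj_mem_cRoots (S.good.ne x0) z hz
  have hzr' : ‖(t : ℂ) - starRingEnd ℂ z‖ < r := by
    have : (t : ℂ) - starRingEnd ℂ z = starRingEnd ℂ (t - z) := by simp
    rw [this, Complex.norm_conj]
    exact hzr
  have heq := hsep _ hconj z hz (by
    calc ‖starRingEnd ℂ z - z‖ = ‖((t : ℂ) - z) - (t - starRingEnd ℂ z)‖ := by congr 1; ring
      _ ≤ _ := norm_sub_le _ _
      _ < 2 * s := by linarith)
  obtain ⟨ξ, rfl⟩ := Complex.conj_eq_iff_real.mp heq
  refine ⟨ξ, (real_mem_cRoots (S.good.ne x0) ξ).mp hz, ?_⟩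
  rw [← Complex.ofReal_sub, Complex.norm_real] at hzr
  exact hzr

lemma local_open {ev : X → R →+* ℝ} {F : Finset R[X]} {P Q : R[X]} (S : Setup ev F P Q)
    (x0 : X) (t0 : ℝ) (r : ℝ) (hr : 0 < r) : ∀ᶠ x in 𝓝 x0, ∃ t, |t - t0| < r ∧ ∀ f ∈ F,
        SignType.sign ((f.map (ev x)).eval t) = SignType.sign ((f.map (ev x0)).eval t0) := by
  by_cases h0 : (Q.map (ev x0)).eval t0 = 0
  · obtain ⟨s, hs, h⟩ := local_root S x0 t0 h0
    filter_upwards [h (min s r) (lt_min hs hr) (min_le_left _ _)] with x ⟨⟨t, ht, htQ⟩, h2⟩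
    exact ⟨t, ht.trans_le (min_le_right _ _), h2 t ht htQ⟩
  · have hst := sign_stable (F := F) S.hev x0 t0
    have hc : Tendsto (fun x => (x, t0)) (𝓝 x0) (𝓝 (x0, t0)) :=
      (Continuous.prodMk continuous_id continuous_const).tendsto x0
    filter_upwards [hc.eventually hst] with x hx
    refine ⟨t0, by simpa using hr, fun f hf => ?_⟩
    rcases S.hF f hf with h | ⟨hg, hdvd⟩
    · simp [h]
    · apply hx f hf
      intro h
      apply h0
      have hd : f ∣ Q := by rw [S.hQ]; exact hdvd.mul_right _
      exact eval_eq_zero_of_dvd_of_eval_eq_zero (Polynomial.map_dvd (ev x0) hd) h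

/-- no roots of `p` between `a` and `b` implies equal signs -/
lemma sign_eq_of_no_root (p : ℝ[X]) (a b : ℝ) (h : ∀ t ∈ Set.uIcc a b, p.eval t ≠ 0) :
    SignType.sign (p.eval a) = SignType.sign (p.eval b) := by
  have hpre : IsPreconnected (Set.uIcc a b) := Set.ordConnected_uIcc.isPreconnected
  have hc : ContinuousOn (fun t => SignType.sign (p.eval t)) (Set.uIcc a b) := by
    intro t ht
    exact (ContinuousAt.comp (g := SignType.sign) (f := fun t => p.eval t)
      (continuousAt_sign_of_ne_zero (h t ht)) p.continuous.continuousAt).continuousWithinAt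
  exact hpre.constant hc Set.left_mem_uIcc Set.right_mem_uIcc

lemma sign_eq_of_no_P_root {ev : X → R →+* ℝ} {F : Finset R[X]} {P Q : R[X]} (S : Setup ev F P Q)
    (x : X) (a b : ℝ) (h : ∀ t ∈ Set.uIcc a b, (P.map (ev x)).eval t ≠ 0) : ∀ f ∈ F,
    SignType.sign ((f.map (ev x)).eval a) = SignType.sign ((f.map (ev x)).eval b) := by
  intro f hf
  rcases S.hF f hf with h' | ⟨hg, hdvd⟩
  · rw [h' x]; simp
  · apply sign_eq_of_no_root
    intro t ht h0
    exact h t ht (eval_eq_zero_of_dvd_of_eval_eq_zero (Polynomial.map_dvd (ev x) hdvd) h0)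

lemma rolle_between (p : ℝ[X]) (hp : p ≠ 0) (t : ℝ) (ht : p.eval t ≠ 0) (a b : ℝ)
    (ha : p.eval a = 0) (hb : p.eval b = 0) (hat : a < t) (htb : t < b) :
    ∃ c, (derivative (Polynomial.X * p)).eval c = 0 ∧ ∀ u ∈ Set.uIcc t c, p.eval u ≠ 0 := by
  classical
  have hlo : (p.roots.toFinset.filter (· < t)).Nonempty :=
    ⟨a, by simp [hp, ha, hat, IsRoot]⟩
  have hhi : (p.roots.toFinset.filter (t < ·)).Nonempty :=
    ⟨b, by simp [hp, hb, htb, IsRoot]⟩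
  set α := (p.roots.toFinset.filter (· < t)).max' hlo with hα
  set β := (p.roots.toFinset.filter (t < ·)).min' hhi with hβ
  have hαm := Finset.max'_mem _ hlo
  have hβm := Finset.min'_mem _ hhi
  rw [← hα] at hαm
  rw [← hβ] at hβm
  simp only [Finset.mem_filter, Multiset.mem_toFinset, mem_roots hp, IsRoot] at hαm hβm
  have hno : ∀ u ∈ Set.Ioo α β, p.eval u ≠ 0 := by
    intro u hu h0
    rcases lt_trichotomy u t with h | h | h
    · have := Finset.le_max' (p.roots.toFinset.filter (· < t)) u (by simp [hp, h0, h, IsRoot])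
      exact absurd hu.1 (not_lt.mpr this)
    · exact ht (h ▸ h0)
    · have := Finset.min'_le (p.roots.toFinset.filter (t < ·)) u (by simp [hp, h0, h, IsRoot])
      exact absurd hu.2 (not_lt.mpr this)
  obtain ⟨c, hc, hc0⟩ := exists_deriv_eq_zero (f := fun u => (Polynomial.X * p).eval u)
    (hαm.2.trans hβm.2) (Polynomial.X * p).continuous.continuousOn (by simp [hαm.1, hβm.1])
  rw [Polynomial.deriv] at hc0
  refine ⟨c, hc0, fun u hu => hno u ?_⟩
  exact Set.ordConnected_Ioo.uIcc_subset ⟨hαm.2, hβm.2⟩ hc hu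

lemma local_closed {ev : X → R →+* ℝ} {F : Finset R[X]} {P Q : R[X]} (S : Setup ev F P Q)
    (x0 : X) : ∀ᶠ x in 𝓝 x0, ∀ t, ∃ t', ∀ f ∈ F,
        SignType.sign ((f.map (ev x)).eval t) = SignType.sign ((f.map (ev x0)).eval t') := by
  classical
  obtain ⟨s, hs, hclose⟩ := roots_close S x0
  set Z := (Q.map (ev x0)).roots.toFinset with hZdef
  have hZ : ∀ ξ, ξ ∈ Z ↔ (Q.map (ev x0)).eval ξ = 0 := by
    intro ξ
    rw [hZdef, Multiset.mem_toFinset, mem_roots (S.good.ne x0)]; rfl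
  have hev1 : ∀ᶠ r in 𝓝[>] (0 : ℝ), ∀ ξ ∈ Z, ∀ᶠ x in 𝓝 x0, ∀ t, |t - ξ| < r →
      (Q.map (ev x)).eval t = 0 → ∀ f ∈ F,
        SignType.sign ((f.map (ev x)).eval t) = SignType.sign ((f.map (ev x0)).eval ξ) := by
    rw [Filter.eventually_all_finset]
    intro ξ hξ
    obtain ⟨s', hs', h'⟩ := local_root S x0 ξ ((hZ ξ).mp hξ)
    filter_upwards [Ioc_mem_nhdsGT hs'] with r hr
    filter_upwards [h' r hr.1 hr.2] with x hx
    exact hx.2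
  obtain ⟨r, hr1, hr2⟩ := (hev1.and (Ioc_mem_nhdsGT hs)).exists
  rw [← Filter.eventually_all_finset] at hr1
  obtain ⟨M, hM⟩ : ∃ M : ℝ, ∀ ξ ∈ Z, |ξ| ≤ M := by
    obtain ⟨M, hM⟩ := (Z.image fun ξ => |ξ|).bddAbove
    exact ⟨M, fun ξ hξ => hM (by simpa using ⟨ξ, hξ, rfl⟩)⟩
  have hval : ∀ x t, (P.map (ev x)).eval t = 0 → (Q.map (ev x)).eval t = 0 := by
    intro x t h
    rw [S.hQ, Polynomial.map_mul, eval_mul, h, zero_mul]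
  have hP0 : ∀ x, P.map (ev x) ≠ 0 := by
    intro x h
    apply S.good.ne x
    rw [S.hQ, Polynomial.map_mul, h, zero_mul]
  have hstab : ∀ t0 : ℝ, (∀ ξ ∈ Z, ξ ≠ t0) → ∀ᶠ x in 𝓝 x0, ∀ f ∈ F,
      SignType.sign ((f.map (ev x)).eval t0) = SignType.sign ((f.map (ev x0)).eval t0) := by
    intro t0 ht0
    have hst := sign_stable (F := F) S.hev x0 t0
    have hc : Tendsto (fun x => (x, t0)) (𝓝 x0) (𝓝 (x0, t0)) :=
      (Continuous.prodMk continuous_id continuous_const).tendsto x0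
    filter_upwards [hc.eventually hst] with x hx f hf
    rcases S.hF f hf with h | ⟨hg, hdvd⟩
    · simp [h]
    · apply hx f hf
      intro h
      exact ht0 t0 ((hZ t0).mpr (hval x0 t0
        (eval_eq_zero_of_dvd_of_eval_eq_zero (Polynomial.map_dvd (ev x0) hdvd) h))) rfl
  have hst1 := hstab (M + r + 1) (fun ξ hξ h => by
    have := (abs_le.mp (hM ξ hξ)).2; linarith [hr2.1])
  have hst2 := hstab (-(M + r + 1)) (fun ξ hξ h => by
    have := (abs_le.mp (hM ξ hξ)).1; linarith [hr2.1])
  filter_upwards [hr1, hclose r hr2.1 hr2.2, hst1, hst2] with x h1 h2 h3 h4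
  have hroot : ∀ t, (Q.map (ev x)).eval t = 0 → ∃ t', ∀ f ∈ F,
        SignType.sign ((f.map (ev x)).eval t) = SignType.sign ((f.map (ev x0)).eval t') := by
    intro t ht
    obtain ⟨ξ, hξ, hξr⟩ := h2 t ht
    exact ⟨ξ, h1 ξ ((hZ ξ).mpr hξ) t hξr ht⟩
  have hbound : ∀ t, (P.map (ev x)).eval t = 0 → |t| < M + r + 1 := by
    intro t ht
    obtain ⟨ξ, hξ, hξr⟩ := h2 t (hval x t ht)
    have := hM ξ ((hZ ξ).mpr hξ)
    have h5 : |t| ≤ |t - ξ| + |ξ| := by simpa using abs_add_le (t - ξ) ξ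
    linarith
  intro t
  by_cases ht : (P.map (ev x)).eval t = 0
  · exact hroot t (hval x t ht)
  by_cases hb : ∃ b, (P.map (ev x)).eval b = 0 ∧ t < b
  · by_cases ha : ∃ a, (P.map (ev x)).eval a = 0 ∧ a < t
    · obtain ⟨b, hb0, htb⟩ := hb
      obtain ⟨a, ha0, hat⟩ := ha
      obtain ⟨c, hc, hno⟩ := rolle_between _ (hP0 x) t ht a b ha0 hb0 hat htb
      have hcQ : (Q.map (ev x)).eval c = 0 := by
        rw [S.hQ, Polynomial.map_mul, eval_mul, ← derivative_map, Polynomial.map_mul,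
          Polynomial.map_X, hc, mul_zero]
      obtain ⟨t', ht'⟩ := hroot c hcQ
      exact ⟨t', fun f hf => (sign_eq_of_no_P_root S x t c hno f hf).trans (ht' f hf)⟩
    · refine ⟨-(M + r + 1), fun f hf => ?_⟩
      rw [← h4 f hf]
      apply sign_eq_of_no_P_root S x _ _ _ f hf
      intro u hu h0
      have hu1 := (abs_lt.mp (hbound u h0)).1
      rcases lt_trichotomy u t with h | h | h
      · exact ha ⟨u, h0, h⟩
      · exact ht (h ▸ h0)
      · have := hu.2
        rcases le_sup_iff.mp this with h' | h' <;> linarith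
  · refine ⟨M + r + 1, fun f hf => ?_⟩
    rw [← h3 f hf]
    apply sign_eq_of_no_P_root S x _ _ _ f hf
    intro u hu h0
    have hu1 := (abs_lt.mp (hbound u h0)).2
    rcases lt_trichotomy t u with h | h | h
    · exact hb ⟨u, h0, h⟩
    · exact ht (h ▸ h0)
    · have := hu.1
      rcases inf_le_iff.mp this with h' | h' <;> linarith

lemma cell_preconnected [PreconnectedSpace X] {ev : X → R →+* ℝ} {F : Finset R[X]} {P Q : R[X]}
    (S : Setup ev F P Q) (hder : ∀ f ∈ F, derivative f ∈ F) (ε : R[X] → SignType) :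
    IsPreconnected {p : X × ℝ | ∀ f ∈ F, SignType.sign ((f.map (ev p.1)).eval p.2) = ε f} := by
  apply preconn_of_fibers
  · intro x0 t0 h0 r hr
    filter_upwards [local_open S x0 t0 r hr] with x ⟨t, ht, h⟩
    exact ⟨t, ht, fun f hf => (h f hf).trans (h0 f hf)⟩
  · intro x0
    filter_upwards [local_closed S x0] with x hx
    rintro ⟨t, ht⟩
    obtain ⟨t', ht'⟩ := hx t
    exact ⟨t', fun f hf => (ht' f hf).symm.trans (ht f hf)⟩
  · intro x
    constructor
    intro s hs t ht u hu f hf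
    have hk : ∀ k, derivative^[k] f ∈ F := by
      intro k
      induction k with
      | zero => exact hf
      | succ k ih => rw [Function.iterate_succ_apply']; exact hder _ ih
    have := thom_aux _ (f.map (ev x)) (Nat.lt_succ_self _) s t (fun k => by
      rw [iterate_derivative_map]
      exact (hs _ (hk k)).trans (ht _ (hk k)).symm) u hu 0
    exact this.trans (hs f hf)

end Local
section Step
open Polynomial

/-- finite set of all coefficients -/
noncomputable def coeffsOf {n : ℕ} (f : (MvPolynomial (Fin n) ℝ)[X]) :
    Finset (MvPolynomial (Fin n) ℝ) := by
  classical exact (Finset.range (f.natDegree + 1)).image f.coeff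

/-- the polynomial controlling the cells for the subfamily `G` -/
noncomputable def qOf {n : ℕ} (G : Finset (MvPolynomial (Fin n) ℝ)[X]) :
    (MvPolynomial (Fin n) ℝ)[X] :=
  (∏ f ∈ G, f) * derivative (Polynomial.X * ∏ f ∈ G, f)

/-- specialization at the points of `A` -/
noncomputable def evA {n : ℕ} (A : Set (Fin n → ℝ)) (x : A) : MvPolynomial (Fin n) ℝ →+* ℝ :=
  MvPolynomial.eval x.1

/-- all signs of members of `B` are constant on `A` -/
def SignConst {n : ℕ} (A : Set (Fin n → ℝ)) (B : Finset (MvPolynomial (Fin n) ℝ)) : Prop :=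
  ∀ f ∈ B, ∀ x ∈ A, ∀ y ∈ A,
      SignType.sign (MvPolynomial.eval x f) = SignType.sign (MvPolynomial.eval y f)

lemma SignConst.zero_iff {n : ℕ} {A : Set (Fin n → ℝ)} {B : Finset (MvPolynomial (Fin n) ℝ)}
    (h : SignConst A B) {f : MvPolynomial (Fin n) ℝ} (hf : f ∈ B) (x y : A) :
    evA A x f = 0 ↔ evA A y f = 0 := by
  have := h f hf x.1 x.2 y.1 y.2
  change MvPolynomial.eval x.1 f = 0 ↔ MvPolynomial.eval y.1 f = 0
  rw [← sign_eq_zero_iff, this, sign_eq_zero_iff]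

lemma evA_cont {n : ℕ} (A : Set (Fin n → ℝ)) (a : MvPolynomial (Fin n) ℝ) :
    Continuous fun x : A => evA A x a :=
  (MvPolynomial.continuous_eval a).comp continuous_subtype_val

lemma good_or_zero {n : ℕ} {A : Set (Fin n → ℝ)} (f : (MvPolynomial (Fin n) ℝ)[X])
    (h : SignConst A (coeffsOf f)) : (∀ x, f.map (evA A x) = 0) ∨ GoodFam (evA A) f := by
  classical
  have hc : ∀ (x y : A) j, (f.map (evA A x)).coeff j = 0 ↔ (f.map (evA A y)).coeff j = 0 := by
    intro x y j
    rw [coeff_map, coeff_map]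
    by_cases hj : j < f.natDegree + 1
    · exact h.zero_iff (Finset.mem_image.mpr ⟨j, Finset.mem_range.mpr hj, rfl⟩) x y
    · rw [coeff_eq_zero_of_natDegree_lt (by omega)]; simp
  have hs : ∀ x y : A, (f.map (evA A x)).support = (f.map (evA A y)).support := by
    intro x y
    ext j
    rw [mem_support_iff, mem_support_iff, not_iff_not]
    exact hc x y j
  by_cases h0 : ∃ x, f.map (evA A x) = 0
  · left
    obtain ⟨x, hx⟩ := h0
    intro y
    rw [← support_eq_empty, hs y x, hx, support_zero]
  · right
    push Not at h0
    refine ⟨h0, fun x y => ?_⟩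
    apply natDegree_eq_of_degree_eq
    rw [degree, degree, hs x y]

/-- the family on the base -/
noncomputable def baseFam {n : ℕ} (F : Finset (MvPolynomial (Fin n) ℝ)[X]) :
    Finset (MvPolynomial (Fin n) ℝ) := by
  classical exact F.biUnion coeffsOf ∪ F.powerset.biUnion fun G => coeffsOf (qOf G) ∪
    (Finset.range ((qOf G).natDegree + 1)).image fun r => gramDet (qOf G) (qOf G).natDegree r

lemma exists_setup {n : ℕ} {A : Set (Fin n → ℝ)} (F : Finset (MvPolynomial (Fin n) ℝ)[X])
    (h : SignConst A (baseFam F)) (hne : A.Nonempty) : ∃ P Q, Setup (evA A) F P Q := by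
  classical
  obtain ⟨a, ha⟩ := hne
  set G := F.filter fun f => GoodFam (evA A) f with hG
  have hGF : G ∈ F.powerset := Finset.mem_powerset.mpr (Finset.filter_subset _ _)
  have hQ0 : ∀ x, (qOf G).map (evA A x) ≠ 0 := by
    intro x
    have hP : (∏ f ∈ G, f).map (evA A x) ≠ 0 := by
      rw [Polynomial.map_prod, Finset.prod_ne_zero_iff]
      intro f hf
      exact (Finset.mem_filter.mp hf).2.ne x
    rw [qOf, Polynomial.map_mul, ← derivative_map, Polynomial.map_mul, Polynomial.map_X]
    refine mul_ne_zero hP fun hd => ?_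
    have h1 := derivative_eq_zero.mp hd
    rw [natDegree_X_mul hP] at h1
    omega
  have hgood : GoodFam (evA A) (qOf G) := by
    rcases good_or_zero (qOf G) (A := A) (fun f hf => h f (by
      apply Finset.mem_union_right
      exact Finset.mem_biUnion.mpr ⟨G, hGF, Finset.mem_union_left _ hf⟩)) with h' | h'
    · exact absurd (h' ⟨a, ha⟩) (hQ0 _)
    · exact h'
  refine ⟨∏ f ∈ G, f, qOf G, evA_cont A, ?_, rfl, hgood, ?_⟩
  · intro f hf
    rcases good_or_zero f (A := A) (fun g hg => h g (by
      apply Finset.mem_union_left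
      exact Finset.mem_biUnion.mpr ⟨f, hf, hg⟩)) with h' | h'
    · exact Or.inl h'
    · exact Or.inr ⟨h', Finset.dvd_prod_of_mem _ (Finset.mem_filter.mpr ⟨hf, h'⟩)⟩
  · intro x y
    apply card_eq_of_gramDet _ _ (hQ0 x) (hQ0 y) (qOf G).natDegree natDegree_map_le natDegree_map_le
    intro r hr
    rw [← gramDet_map, ← gramDet_map]
    apply h.zero_iff
    apply Finset.mem_union_right
    refine Finset.mem_biUnion.mpr ⟨G, hGF, Finset.mem_union_right _ ?_⟩
    exact Finset.mem_image.mpr ⟨r, Finset.mem_range.mpr (by omega), rfl⟩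

/-- the cell over `A` given by signs `ε` -/
def cellOf {n : ℕ} (F : Finset (MvPolynomial (Fin n) ℝ)[X]) (A : Set (Fin n → ℝ))
    (ε : (MvPolynomial (Fin n) ℝ)[X] → SignType) : Set (Fin (n + 1) → ℝ) :=
  {y | Fin.tail y ∈ A ∧ ∀ f ∈ F,
    SignType.sign ((f.map (MvPolynomial.eval (Fin.tail y))).eval (y 0)) = ε f}

lemma eval_tail {n : ℕ} (y : Fin (n + 1) → ℝ) (g : MvPolynomial (Fin (n + 1)) ℝ) :
    MvPolynomial.eval y g =
      ((MvPolynomial.finSuccEquiv ℝ n g).map (MvPolynomial.eval (Fin.tail y))).eval (y 0) := by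
  conv_lhs => rw [← Fin.cons_self_tail y]
  exact MvPolynomial.eval_eq_eval_mv_eval' _ _ _

lemma cellOf_sa {n : ℕ} (F : Finset (MvPolynomial (Fin n) ℝ)[X]) (A : Set (Fin n → ℝ))
    (hA : IsSemialgebraic (Fin n) A) (ε : (MvPolynomial (Fin n) ℝ)[X] → SignType) :
    IsSemialgebraic (Fin (n + 1)) (cellOf F A ε) := by
  apply sa_inter (sa_tail hA)
  apply sa_iInter F (fun f => {y : Fin (n + 1) → ℝ |
    SignType.sign ((f.map (MvPolynomial.eval (Fin.tail y))).eval (y 0)) = ε f})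
  intro f _
  convert sa_sign ((MvPolynomial.finSuccEquiv ℝ n).symm f) (ε f) using 3 with y
  rw [eval_tail, AlgEquiv.apply_symm_apply]

lemma cellOf_preconn {n : ℕ} (F : Finset (MvPolynomial (Fin n) ℝ)[X])
    (hder : ∀ f ∈ F, derivative f ∈ F) (A : Set (Fin n → ℝ))
    (hA : IsPreconnected A) (h : SignConst A (baseFam F))
    (ε : (MvPolynomial (Fin n) ℝ)[X] → SignType) : IsPreconnected (cellOf F A ε) := by
  rcases A.eq_empty_or_nonempty with rfl | hne
  · have : cellOf F ∅ ε = ∅ := by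
      ext y; simp [cellOf]
    rw [this]; exact isPreconnected_empty
  obtain ⟨P, Q, S⟩ := exists_setup F h hne
  have : PreconnectedSpace A := isPreconnected_iff_preconnectedSpace.mp hA
  have hc := cell_preconnected S hder ε
  have hcont : Continuous fun p : A × ℝ => (Fin.cons p.2 p.1.1 : Fin (n + 1) → ℝ) := by
    refine continuous_pi fun i => ?_
    refine Fin.cases ?_ (fun j => ?_) i
    · simpa using continuous_snd
    · simp only [Fin.cons_succ]
      exact (continuous_apply j).comp (continuous_subtype_val.comp continuous_fst)
  convert hc.image _ hcont.continuousOn using 1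
  ext y
  constructor
  · rintro ⟨h1, h2⟩
    exact ⟨(⟨Fin.tail y, h1⟩, y 0), h2, Fin.cons_self_tail y⟩
  · rintro ⟨⟨x, t⟩, hp, rfl⟩
    refine ⟨?_, ?_⟩
    · simp
    · simpa [evA] using hp

/-- closure under derivatives -/
lemma exists_closure {n : ℕ} (F : Finset (MvPolynomial (Fin (n + 1)) ℝ)) :
    ∃ F' : Finset (MvPolynomial (Fin n) ℝ)[X], (∀ f ∈ F', derivative f ∈ F') ∧
      ∀ f ∈ F, MvPolynomial.finSuccEquiv ℝ n f ∈ F' := by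
  classical
  refine ⟨F.biUnion fun f => (Finset.range ((MvPolynomial.finSuccEquiv ℝ n f).natDegree + 2)).image
    fun k => derivative^[k] (MvPolynomial.finSuccEquiv ℝ n f), ?_, ?_⟩
  · intro g hg
    simp only [Finset.mem_biUnion, Finset.mem_image, Finset.mem_range] at hg ⊢
    obtain ⟨f, hf, k, hk, rfl⟩ := hg
    refine ⟨f, hf, ?_⟩
    by_cases hk' : k + 1 < (MvPolynomial.finSuccEquiv ℝ n f).natDegree + 2
    · exact ⟨k + 1, hk', Function.iterate_succ_apply' _ _ _⟩
    · refine ⟨k, hk, ?_⟩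
      rw [iterate_derivative_eq_zero (by omega), derivative_zero]
  · intro f hf
    simp only [Finset.mem_biUnion, Finset.mem_image, Finset.mem_range]
    exact ⟨f, hf, 0, by omega, rfl⟩

lemma hasCover_succ (n : ℕ) (hn : HasCover n) : HasCover (n + 1) := by
  classical
  intro F
  obtain ⟨F', hder, hsub⟩ := exists_closure F
  obtain ⟨K, hK, hKA, hcov⟩ := hn (baseFam F')
  let ext : (F' → SignType) → (MvPolynomial (Fin n) ℝ)[X] → SignType :=
    fun ε f => if h : f ∈ F' then ε ⟨f, h⟩ else 0
  refine ⟨(fun p : Set (Fin n → ℝ) × (F' → SignType) => cellOf F' p.1 (ext p.2)) ''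
    (K ×ˢ Set.univ), (hK.prod Set.finite_univ).image _, ?_, ?_⟩
  · rintro _ ⟨⟨A, ε⟩, ⟨hA, -⟩, rfl⟩
    obtain ⟨h1, h2, h3⟩ := hKA A hA
    refine ⟨cellOf_sa F' A h1 _, cellOf_preconn F' hder A h2 h3 _, ?_⟩
    intro f hf x hx y hy
    rw [eval_tail x, eval_tail y, hx.2 _ (hsub f hf), hy.2 _ (hsub f hf)]
  · intro y
    obtain ⟨A, hA, hy⟩ := hcov (Fin.tail y)
    refine ⟨_, ⟨(A, fun f => SignType.sign
      ((f.1.map (MvPolynomial.eval (Fin.tail y))).eval (y 0))), ⟨hA, trivial⟩, rfl⟩, hy, ?_⟩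
    intro f hf
    simp [ext, hf]

lemma hasCover (n : ℕ) : HasCover n := by
  induction n with
  | zero =>
    intro F
    refine ⟨{Set.univ}, Set.finite_singleton _, ?_, fun x => ⟨_, rfl, trivial⟩⟩
    rintro A rfl
    refine ⟨sa_univ _, Set.subsingleton_univ.isPreconnected, ?_⟩
    intro f _ x _ y _
    rw [Subsingleton.elim x y]
  | succ n ih => exact hasCover_succ n ih

end Step

/-- The connected components of a semialgebraic set are semialgebraic, and
there are finitely many of them. -/
theorem semialgebraic_components (n : ℕ) (S : Set (Fin n → ℝ))
    (hS : IsSemialgebraic (Fin n) S) :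
    (∀ x ∈ S, IsSemialgebraic (Fin n) (connectedComponentIn S x)) ∧
      {C : Set (Fin n → ℝ) | ∃ x ∈ S, C = connectedComponentIn S x}.Finite := by
  exact components_of_cover n (hasCover n) S hS
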